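/- There exists a universal constant C₂ > 0 with the following property. Let (α,β) be a non-rational pair of real numbers, δ > 0, N ≥ 1 an integer, and let f : B_δ → ℂ be a bounded holomorphic 1-periodic function. Then the trigonometric polynomial g(θ) = ∑_{|n|≤N} f̂(n) e^{2πinθ}/(e^{2πiβ} − e^{2πinα}) satisfies e^{2πiβ} g(θ) − g(θ+α) = f|_N(θ) for all θ, and one has the bounds ‖g‖_{B_δ} ≤ C₂ N Γ_{α,β}(N) ‖f‖_{B_δ} and ‖∂_θ g‖_{B_δ} ≤ C₂ N² Γ_{α,β}(N) ‖f‖_{B_δ}. -/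

import Mathlib

noncomputable def distNearestInt (x : ℝ) : ℝ := |x - round x|

noncomputable def GammaA (α : ℝ) (N : ℕ) : ℝ :=
  sSup ((fun n : ℤ => (distNearestInt ((n : ℝ) * α))⁻¹) '' {n : ℤ | n ≠ 0 ∧ |n| ≤ (N : ℤ)})

noncomputable def GammaAB (α β : ℝ) (N : ℕ) : ℝ :=
  sSup ((fun n : ℤ => (distNearestInt ((n : ℝ) * α - β))⁻¹) '' {n : ℤ | |n| ≤ (N : ℤ)})

def IsNonRationalPair (α β : ℝ) : Prop := ∀ k m : ℤ, (k : ℝ) * α - β ≠ (m : ℝ)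

def BrjunoCond (α : ℝ) : Prop :=
  Summable (fun N : ℕ => Real.log (GammaA α (N + 1)) / ((N : ℝ) + 1) ^ 2)

def Strip (δ : ℝ) : Set ℂ := {θ : ℂ | |θ.im| < δ}

noncomputable def supNorm (f : ℂ → ℂ) (s : Set ℂ) : ℝ := sSup ((fun z => ‖f z‖) '' s)

noncomputable def fCoeff (f : ℂ → ℂ) (n : ℤ) : ℂ :=
  ∫ x in (0:ℝ)..1, f x * Complex.exp (-(2 * Real.pi * Complex.I * n * x))

/-- The truncation of f up to order N. -/
noncomputable def truncN (f : ℂ → ℂ) (N : ℕ) (θ : ℂ) : ℂ :=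
  ∑ n ∈ Finset.Icc (-(N : ℤ)) (N : ℤ), fCoeff f n * Complex.exp (2 * Real.pi * Complex.I * n * θ)

/-- The Fourier coefficients of a periodic holomorphic function can be computed on any horizontal
line of the strip. -/
lemma fCoeff_eq_integral_shift {δ : ℝ} {f : ℂ → ℂ} (hf : DifferentiableOn ℂ f (Strip δ))
    (hper : ∀ θ ∈ Strip δ, f (θ + 1) = f θ) (n : ℤ) {y : ℝ} (hy : |y| < δ) :
    fCoeff f n = ∫ x in (0 : ℝ)..1, f (x + y * Complex.I) *
      Complex.exp (-(2 * Real.pi * Complex.I * n * (x + y * Complex.I))) := by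
  set F : ℂ → ℂ := fun z => f z * Complex.exp (-(2 * Real.pi * Complex.I * n * z)) with hF
  have hmem : ∀ t ∈ Set.uIcc 0 y, |t| < δ := fun t ht => by
    have := Set.abs_sub_left_of_mem_uIcc ht
    simp only [sub_zero] at this
    exact this.trans_lt hy
  have hdiff : DifferentiableOn ℂ F (Strip δ) := hf.mul (by fun_prop)
  have hFper : ∀ z ∈ Strip δ, F (1 + z) = F z := fun z hz => by
    have hexp : Complex.exp (-(2 * Real.pi * Complex.I * n * (z + 1))) =
        Complex.exp (-(2 * Real.pi * Complex.I * n * z)) :=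
      Complex.exp_eq_exp_iff_exists_int.2 ⟨-n, by push_cast; ring⟩
    simp only [hF, add_comm (1 : ℂ) z, hper z hz, hexp]
  have hrect := Complex.integral_boundary_rect_eq_zero_of_differentiableOn F 0 (1 + y * Complex.I)
    (hdiff.mono fun z hz => hmem z.im (by simpa using hz.2))
  have hsides : ∫ t in (0 : ℝ)..y, F (1 + t * Complex.I) =
      ∫ t in (0 : ℝ)..y, F (t * Complex.I) :=
    intervalIntegral.integral_congr fun t ht => hFper _ (by simpa [Strip] using hmem t ht)
  simp [hsides] at hrect
  simpa [fCoeff, hF] using sub_eq_zero.1 hrect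

/-- Each Fourier mode of a bounded periodic holomorphic function on a strip is bounded by the sup
norm of the function. -/
lemma norm_fCoeff_mul_exp_le {δ : ℝ} {f : ℂ → ℂ} (hf : DifferentiableOn ℂ f (Strip δ))
    (hper : ∀ θ ∈ Strip δ, f (θ + 1) = f θ) (hbdd : BddAbove ((fun z => ‖f z‖) '' Strip δ))
    (n : ℤ) {θ : ℂ} (hθ : θ ∈ Strip δ) :
    ‖fCoeff f n * Complex.exp (2 * Real.pi * Complex.I * n * θ)‖ ≤ supNorm f (Strip δ) := by
  rw [fCoeff_eq_integral_shift hf hper n hθ, ← intervalIntegral.integral_mul_const]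
  refine (intervalIntegral.norm_integral_le_of_norm_le_const
    (C := supNorm f (Strip δ)) fun x _ => ?_).trans (by simp)
  rw [mul_assoc, ← Complex.exp_add, norm_mul, Complex.norm_exp]
  have hre : (-(2 * Real.pi * Complex.I * n * (x + θ.im * Complex.I)) +
      2 * Real.pi * Complex.I * n * θ).re = 0 := by
    simp
  rw [hre, Real.exp_zero, mul_one]
  exact le_csSup hbdd ⟨_, by simpa [Strip] using hθ, rfl⟩

lemma two_mul_distNearestInt_le_abs_sin (x : ℝ) :
    2 * distNearestInt x ≤ |Real.sin (Real.pi * x)| := by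
  have hround : |x - round x| ≤ 1 / 2 := abs_sub_round x
  have hsin : |Real.sin (Real.pi * x)| = |Real.sin (Real.pi * (x - round x))| := by
    rw [mul_sub, mul_comm Real.pi (round x : ℝ), Real.sin_sub_int_mul_pi, abs_mul, abs_zpow]
    simp
  have habs : |Real.pi * (x - round x)| = Real.pi * |x - round x| := by
    rw [abs_mul, abs_of_pos Real.pi_pos]
  have := Real.mul_abs_le_abs_sin (x := Real.pi * (x - round x))
    (by rw [habs]; nlinarith [Real.pi_pos])
  rw [habs] at this
  rw [hsin]
  refine le_trans (le_of_eq ?_) this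
  unfold distNearestInt
  field_simp

lemma four_mul_distNearestInt_le_norm_exp_sub (a b : ℝ) :
    4 * distNearestInt (a - b) ≤ ‖Complex.exp (2 * Real.pi * Complex.I * b) -
      Complex.exp (2 * Real.pi * Complex.I * a)‖ := by
  have hfactor : Complex.exp (2 * Real.pi * Complex.I * b) -
      Complex.exp (2 * Real.pi * Complex.I * a) = -(Complex.exp ((2 * Real.pi * b : ℝ) * Complex.I) *
        (Complex.exp (Complex.I * (2 * Real.pi * (a - b) : ℝ)) - 1)) := by
    rw [mul_sub, ← Complex.exp_add, mul_one, neg_sub]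
    push_cast
    ring_nf
  rw [hfactor, norm_neg, norm_mul, Complex.norm_exp_ofReal_mul_I, one_mul,
    Complex.norm_exp_I_mul_ofReal_sub_one, norm_mul, Real.norm_eq_abs, Real.norm_eq_abs, abs_two,
    show 2 * Real.pi * (a - b) / 2 = Real.pi * (a - b) by ring]
  linarith [two_mul_distNearestInt_le_abs_sin (a - b)]

lemma IsNonRationalPair.distNearestInt_pos {α β : ℝ} (h : IsNonRationalPair α β) (n : ℤ) :
    0 < distNearestInt (n * α - β) :=
  abs_pos.2 (sub_ne_zero.2 (h n _))

lemma inv_distNearestInt_le_GammaAB (α β : ℝ) {N : ℕ} {n : ℤ} (hn : |n| ≤ (N : ℤ)) :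
    (distNearestInt (n * α - β))⁻¹ ≤ GammaAB α β N := by
  have hfin : {n : ℤ | |n| ≤ (N : ℤ)}.Finite :=
    (Set.finite_Icc (-(N : ℤ)) N).subset fun m hm => abs_le.1 hm
  exact le_csSup (hfin.image _).bddAbove ⟨n, hn, rfl⟩

lemma IsNonRationalPair.exp_sub_exp_ne_zero {α β : ℝ} (h : IsNonRationalPair α β) (n : ℤ) :
    Complex.exp (2 * Real.pi * Complex.I * β) - Complex.exp (2 * Real.pi * Complex.I * n * α) ≠
      0 := by
  have hle := four_mul_distNearestInt_le_norm_exp_sub (n * α) β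
  have hpos := h.distNearestInt_pos n
  push_cast [← mul_assoc] at hle
  exact norm_pos_iff.1 (by linarith)

lemma IsNonRationalPair.inv_norm_exp_sub_exp_le {α β : ℝ} (h : IsNonRationalPair α β) {N : ℕ}
    {n : ℤ} (hn : |n| ≤ (N : ℤ)) :
    ‖Complex.exp (2 * Real.pi * Complex.I * β) - Complex.exp (2 * Real.pi * Complex.I * n * α)‖⁻¹ ≤
      GammaAB α β N := by
  have hle := four_mul_distNearestInt_le_norm_exp_sub (n * α) β
  have hpos := h.distNearestInt_pos n
  push_cast [← mul_assoc] at hle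
  exact (inv_anti₀ hpos (by linarith)).trans (inv_distNearestInt_le_GammaAB α β hn)

lemma norm_sum_Icc_neg_le {N : ℕ} (hN : 1 ≤ N) {u : ℤ → ℂ} {B : ℝ} (hB : 0 ≤ B)
    (hu : ∀ n ∈ Finset.Icc (-(N : ℤ)) N, ‖u n‖ ≤ B) :
    ‖∑ n ∈ Finset.Icc (-(N : ℤ)) N, u n‖ ≤ 3 * N * B := by
  have hcard : ((Finset.Icc (-(N : ℤ)) N).card : ℝ) ≤ 3 * N := by
    have : (Finset.Icc (-(N : ℤ)) N).card ≤ 3 * N := by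
      rw [Int.card_Icc]
      omega
    exact_mod_cast this
  refine (norm_sum_le_of_le _ hu).trans ?_
  rw [Finset.sum_const, nsmul_eq_mul]
  gcongr

/-- solution and estimates for the truncated twisted cohomological equation
e^{2πiβ} g(θ) − g(θ+α) = f|_N(θ). -/
theorem stmt_8 :
    ∃ C₂ : ℝ, 0 < C₂ ∧
      ∀ (α β : ℝ), IsNonRationalPair α β →
        ∀ (δ : ℝ), 0 < δ →
          ∀ (N : ℕ), 1 ≤ N →
            ∀ f : ℂ → ℂ,
              DifferentiableOn ℂ f (Strip δ) →
              (∀ θ ∈ Strip δ, f (θ + 1) = f θ) →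
              BddAbove ((fun z => ‖f z‖) '' Strip δ) →
              ∀ g : ℂ → ℂ,
                (g = fun θ => ∑ n ∈ Finset.Icc (-(N : ℤ)) (N : ℤ),
                    fCoeff f n * Complex.exp (2 * Real.pi * Complex.I * n * θ) /
                      (Complex.exp (2 * Real.pi * Complex.I * β) -
                        Complex.exp (2 * Real.pi * Complex.I * n * α))) →
                (∀ θ : ℂ,
                    Complex.exp (2 * Real.pi * Complex.I * β) * g θ - g (θ + α) = truncN f N θ) ∧
                  supNorm g (Strip δ) ≤ C₂ * N * GammaAB α β N * supNorm f (Strip δ) ∧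
                  supNorm (deriv g) (Strip δ) ≤ C₂ * N ^ 2 * GammaAB α β N * supNorm f (Strip δ) := by
  refine ⟨24, by norm_num, ?_⟩
  intro α β hαβ δ hδ N hN f hf hper hbdd g hg
  have hne : (Strip δ).Nonempty := ⟨0, by simpa [Strip] using hδ⟩
  have hM : 0 ≤ supNorm f (Strip δ) :=
    Real.sSup_nonneg fun _ ⟨_, _, h⟩ => h ▸ norm_nonneg _
  have hΓ : 0 ≤ GammaAB α β N :=
    (inv_nonneg.2 (abs_nonneg _)).trans (inv_distNearestInt_le_GammaAB α β (n := 0) (by simp))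
  have hterm : ∀ θ ∈ Strip δ, ∀ n ∈ Finset.Icc (-(N : ℤ)) (N : ℤ),
      ‖fCoeff f n * Complex.exp (2 * Real.pi * Complex.I * n * θ) /
        (Complex.exp (2 * Real.pi * Complex.I * β) -
          Complex.exp (2 * Real.pi * Complex.I * n * α))‖ ≤
        GammaAB α β N * supNorm f (Strip δ) := fun θ hθ n hn => by
    rw [norm_div, div_eq_mul_inv, mul_comm]
    exact mul_le_mul (hαβ.inv_norm_exp_sub_exp_le (abs_le.2 (Finset.mem_Icc.1 hn)))
      (norm_fCoeff_mul_exp_le hf hper hbdd n hθ) (norm_nonneg _) hΓ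
  have hderiv : ∀ θ : ℂ, deriv g θ = ∑ n ∈ Finset.Icc (-(N : ℤ)) (N : ℤ),
      2 * Real.pi * Complex.I * n * (fCoeff f n * Complex.exp (2 * Real.pi * Complex.I * n * θ) /
        (Complex.exp (2 * Real.pi * Complex.I * β) -
          Complex.exp (2 * Real.pi * Complex.I * n * α))) := fun θ => by
    rw [hg]
    refine HasDerivAt.deriv (HasDerivAt.fun_sum fun n _ => ?_)
    refine (((((hasDerivAt_id' θ).const_mul (2 * Real.pi * Complex.I * n)).cexp).const_mul
      (fCoeff f n)).div_const (Complex.exp (2 * Real.pi * Complex.I * β) -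
          Complex.exp (2 * Real.pi * Complex.I * n * α))).congr_deriv ?_
    ring
  refine ⟨fun θ => ?_, csSup_le (hne.image _) ?_, csSup_le (hne.image _) ?_⟩
  · rw [hg, truncN, Finset.mul_sum, ← Finset.sum_sub_distrib]
    refine Finset.sum_congr rfl fun n _ => ?_
    have hD := hαβ.exp_sub_exp_ne_zero n
    rw [mul_add, Complex.exp_add]
    field_simp
  · rintro _ ⟨θ, hθ, rfl⟩
    have hsum := norm_sum_Icc_neg_le hN (mul_nonneg hΓ hM) (hterm θ hθ)
    have hnonneg : 0 ≤ N * (GammaAB α β N * supNorm f (Strip δ)) := by positivity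
    simp only [hg]
    linarith
  · rintro _ ⟨θ, hθ, rfl⟩
    simp only [hderiv]
    refine (norm_sum_Icc_neg_le hN (B := 8 * N * (GammaAB α β N * supNorm f (Strip δ)))
      (by positivity) fun n hn => ?_).trans (le_of_eq (by ring))
    rw [norm_mul]
    refine mul_le_mul ?_ (hterm θ hθ n hn) (norm_nonneg _) (by positivity)
    have hn_abs : |(n : ℝ)| ≤ N := by
      exact_mod_cast abs_le.2 (Finset.mem_Icc.1 hn)
    simp only [norm_mul, Complex.norm_I, Complex.norm_intCast, Complex.norm_real,
      Complex.norm_ofNat, Real.norm_eq_abs, abs_of_pos Real.pi_pos, mul_one]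
    gcongr
    linarith [Real.pi_lt_four]
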